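/- arXiv:2003.01695 — 6 statements merged into one kernel-verified Lean document; each statement's English description precedes it below -/
import Mathlib

section
/- Let x₁, x₂ be real numbers, let ρ be the 2×2 complex matrix with entries ρ₀₀ = cos²(πx₁), ρ₀₁ = e^{−2πi x₂} cos(πx₁) sin(πx₁), ρ₁₀ = e^{2πi x₂} cos(πx₁) sin(πx₁), ρ₁₁ = sin²(πx₁) (the dense angle encoding of (x₁,x₂)), and let U be a 2×2 unitary matrix whose entries U₀₀ = a and U₀₁ = b are real. Then Tr[Π₀ U ρ U†] = a² cos²(πx₁) + a b sin(2πx₁) cos(2πx₂) + b² sin²(πx₁). In particular, the decision boundary of a single-qubit classifier with the dense angle encoding is defined by a² cos²(πx₁) + a b sin(2πx₁) cos(2πx₂) + b² sin²(πx₁) = 1/2. -/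
/-!
Only the first row `(a, b)` of `U` contributes to `Tr[Π₀ U ρ U†]`, which is therefore
`a² ρ₀₀ + a b (ρ₀₁ + ρ₁₀) + b² ρ₁₁`. Euler's formula gives
`ρ₀₁ + ρ₁₀ = 2 cos(πx₁) sin(πx₁) cos(2πx₂) = sin(2πx₁) cos(2πx₂)`. Both sides being real,
the boundary equation over `ℂ` is the one over `ℝ`.
-/

open Matrix Complex

noncomputable def Proj0 : Matrix (Fin 2) (Fin 2) ℂ := !![1, 0; 0, 0]

/-- The dense angle encoding of `(x₁, x₂) ∈ ℝ²` as a 2×2 density matrix: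
`ρ = |x⟩⟨x|` with `|x⟩ = cos(πx₁)|0⟩ + e^{2πi x₂} sin(πx₁)|1⟩`. -/
noncomputable def daeEnc (x₁ x₂ : ℝ) : Matrix (Fin 2) (Fin 2) ℂ :=
  !![((Real.cos (Real.pi * x₁) : ℝ) : ℂ) ^ 2,
     Complex.exp (-((2 * Real.pi * x₂ : ℝ) : ℂ) * Complex.I) *
       ((Real.cos (Real.pi * x₁) : ℝ) : ℂ) * ((Real.sin (Real.pi * x₁) : ℝ) : ℂ);
     Complex.exp (((2 * Real.pi * x₂ : ℝ) : ℂ) * Complex.I) *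
       ((Real.cos (Real.pi * x₁) : ℝ) : ℂ) * ((Real.sin (Real.pi * x₁) : ℝ) : ℂ),
     ((Real.sin (Real.pi * x₁) : ℝ) : ℂ) ^ 2]

/-- For `(x₁,x₂) ∈ ℝ²` encoded via the dense angle encoding and a
2×2 unitary `U` with real entries `U₀₀ = a`, `U₀₁ = b`, we have
`Tr[Π₀ U ρ U†] = a² cos²(πx₁) + a b sin(2πx₁) cos(2πx₂) + b² sin²(πx₁)`;
in particular the decision boundary is
`a² cos²(πx₁) + a b sin(2πx₁) cos(2πx₂) + b² sin²(πx₁) = 1/2`. -/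
theorem dae_encoding_decision_boundary
    (x₁ x₂ a b : ℝ)
    (U : Matrix (Fin 2) (Fin 2) ℂ) (hU : U ∈ Matrix.unitaryGroup (Fin 2) ℂ)
    (ha : U 0 0 = (a : ℂ)) (hb : U 0 1 = (b : ℂ)) :
    (Proj0 * U * daeEnc x₁ x₂ * Uᴴ).trace
      = ((a ^ 2 * Real.cos (Real.pi * x₁) ^ 2
          + a * b * Real.sin (2 * Real.pi * x₁) * Real.cos (2 * Real.pi * x₂)
          + b ^ 2 * Real.sin (Real.pi * x₁) ^ 2 : ℝ) : ℂ)
    ∧ ((Proj0 * U * daeEnc x₁ x₂ * Uᴴ).trace = 1 / 2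
        ↔ a ^ 2 * Real.cos (Real.pi * x₁) ^ 2
          + a * b * Real.sin (2 * Real.pi * x₁) * Real.cos (2 * Real.pi * x₂)
          + b ^ 2 * Real.sin (Real.pi * x₁) ^ 2 = 1 / 2) := by
  have key : (Proj0 * U * daeEnc x₁ x₂ * Uᴴ).trace
      = ((a ^ 2 * Real.cos (Real.pi * x₁) ^ 2
          + a * b * Real.sin (2 * Real.pi * x₁) * Real.cos (2 * Real.pi * x₂)
          + b ^ 2 * Real.sin (Real.pi * x₁) ^ 2 : ℝ) : ℂ) := by
    have hsin : Real.sin (2 * Real.pi * x₁)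
        = 2 * Real.sin (Real.pi * x₁) * Real.cos (Real.pi * x₁) := by
      rw [mul_assoc, Real.sin_two_mul]
    -- Euler's formula for both phases: the imaginary parts cancel in the sum
    -- of the two off-diagonal contributions.
    have hpos := Complex.exp_mul_I ((2 * Real.pi * x₂ : ℝ) : ℂ)
    have hneg := Complex.exp_mul_I (-((2 * Real.pi * x₂ : ℝ) : ℂ))
    rw [Complex.cos_neg, Complex.sin_neg] at hneg
    rw [← Complex.ofReal_cos, ← Complex.ofReal_sin] at hpos hneg
    rw [hsin]
    simp only [Proj0, daeEnc, hpos, hneg, Matrix.trace_fin_two, Matrix.mul_apply,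
      Fin.sum_univ_two, Matrix.conjTranspose_apply, ha, hb, Matrix.of_apply,
      Matrix.cons_val_zero, Matrix.cons_val_one, Matrix.cons_val', Matrix.cons_val_fin_one,
      RCLike.star_def, Complex.conj_ofReal]
    simp only [Complex.ofReal_add, Complex.ofReal_mul, Complex.ofReal_pow, Complex.ofReal_ofNat]
    ring
  refine ⟨key, ?_⟩
  rw [key, show (1 / 2 : ℂ) = ((1 / 2 : ℝ) : ℂ) by norm_num, Complex.ofReal_inj]
end

section
/- Let ρ be a single-qubit state, let p_I, p_X, p_Y, p_Z be nonnegative reals with p_I + p_X + p_Y + p_Z = 1, and let E_p(ρ) = p_I ρ + p_X XρX + p_Y YρY + p_Z ZρZ be the Pauli channel. If p_X + p_Y ≤ 1/2, then Tr[Π₀ ρ] ≥ 1/2 implies Tr[Π₀ E_p(ρ)] ≥ 1/2; if moreover p_X + p_Y < 1/2, then also Tr[Π₀ ρ] < 1/2 implies Tr[Π₀ E_p(ρ)] < 1/2. Consequently, when p_X + p_Y < 1/2, the predicted label ŷ is the same for E_p(ρ) and ρ, i.e., every state is a robust point of the Pauli channel. -/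
/-! Conjugation by `X` or `Y` swaps the diagonal entries of `ρ`, while conjugation by `Z` fixes them.
With `t = Tr[Π₀ ρ]` and `q = p_X + p_Y`, trace one gives `Tr[Π₀ E_p(ρ)] = (1 - q) t + q (1 - t)`, i.e.
`Tr[Π₀ E_p(ρ)] - 1/2 = (1 - 2 q) (t - 1/2)`. The factor `1 - 2 q` is nonnegative (resp. positive)
when `q ≤ 1/2` (resp. `q < 1/2`), so the sign of `t - 1/2` is preserved. -/

open Matrix Complex
open scoped ComplexOrder

noncomputable def pauliX : Matrix (Fin 2) (Fin 2) ℂ := !![0, 1; 1, 0]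
noncomputable def pauliY : Matrix (Fin 2) (Fin 2) ℂ := !![0, -Complex.I; Complex.I, 0]
noncomputable def pauliZ : Matrix (Fin 2) (Fin 2) ℂ := !![1, 0; 0, -1]

/-- The Pauli channel `E_p(ρ) = p_I ρ + p_X XρX + p_Y YρY + p_Z ZρZ`. -/
noncomputable def pauliChannel (pI pX pY pZ : ℝ) (ρ : Matrix (Fin 2) (Fin 2) ℂ) :
    Matrix (Fin 2) (Fin 2) ℂ :=
  (pI : ℂ) • ρ + (pX : ℂ) • (pauliX * ρ * pauliX)
    + (pY : ℂ) • (pauliY * ρ * pauliY) + (pZ : ℂ) • (pauliZ * ρ * pauliZ)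

/-- The decision rule: label `0` iff `Tr[Π₀ ρ] ≥ 1/2`, else label `1`. -/
noncomputable def yhat (ρ : Matrix (Fin 2) (Fin 2) ℂ) : ℕ :=
  if 1 / 2 ≤ ((Proj0 * ρ).trace).re then 0 else 1

/-- The Pauli channel scales the bias `Tr[Π₀ ρ] - 1/2` by `1 - 2 (p_X + p_Y)`. -/
lemma trace_proj0_pauliChannel_sub_half
    (ρ : Matrix (Fin 2) (Fin 2) ℂ) (htr : ρ.trace = 1)
    (pI pX pY pZ : ℝ) (hsum : pI + pX + pY + pZ = 1) :
    ((Proj0 * pauliChannel pI pX pY pZ ρ).trace).re - 1 / 2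
      = (1 - 2 * (pX + pY)) * (((Proj0 * ρ).trace).re - 1 / 2) := by
  have hdiag : (ρ 0 0).re + (ρ 1 1).re = 1 := by
    simpa [Matrix.trace_fin_two] using congrArg Complex.re htr
  have htrace (A : Matrix (Fin 2) (Fin 2) ℂ) : (Proj0 * A).trace = A 0 0 := by
    simp only [Matrix.trace_fin_two, Matrix.mul_apply, Fin.sum_univ_two]
    simp [Proj0]
  have hout : (pauliChannel pI pX pY pZ ρ 0 0).re
      = (pI + pZ) * (ρ 0 0).re + (pX + pY) * (ρ 1 1).re := by
    simp only [pauliChannel, Matrix.add_apply, Matrix.smul_apply, Matrix.mul_apply,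
      Fin.sum_univ_two]
    simp [pauliX, pauliY, pauliZ]
    ring
  rw [htrace, htrace, hout]
  linear_combination (ρ 0 0).re * hsum + (pX + pY) * hdiag

/-- For a single-qubit state `ρ` and the Pauli channel: if
`p_X + p_Y ≤ 1/2` then `Tr[Π₀ ρ] ≥ 1/2` implies `Tr[Π₀ E_p(ρ)] ≥ 1/2`; if
`p_X + p_Y < 1/2` then also `Tr[Π₀ ρ] < 1/2` implies `Tr[Π₀ E_p(ρ)] < 1/2`, and
hence the predicted label is unchanged: every state is a robust point. -/
theorem pauliChannel_robust
    (ρ : Matrix (Fin 2) (Fin 2) ℂ) (hρ : ρ.PosSemidef) (htr : ρ.trace = 1)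
    (pI pX pY pZ : ℝ) (hI : 0 ≤ pI) (hX : 0 ≤ pX) (hY : 0 ≤ pY) (hZ : 0 ≤ pZ)
    (hsum : pI + pX + pY + pZ = 1) :
    (pX + pY ≤ 1 / 2 →
      (1 / 2 ≤ ((Proj0 * ρ).trace).re →
        1 / 2 ≤ ((Proj0 * pauliChannel pI pX pY pZ ρ).trace).re))
    ∧ (pX + pY < 1 / 2 →
      (((Proj0 * ρ).trace).re < 1 / 2 →
        ((Proj0 * pauliChannel pI pX pY pZ ρ).trace).re < 1 / 2))
    ∧ (pX + pY < 1 / 2 → yhat (pauliChannel pI pX pY pZ ρ) = yhat ρ) := by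
  have key := trace_proj0_pauliChannel_sub_half ρ htr pI pX pY pZ hsum
  have hge : pX + pY ≤ 1 / 2 → 1 / 2 ≤ ((Proj0 * ρ).trace).re →
      1 / 2 ≤ ((Proj0 * pauliChannel pI pX pY pZ ρ).trace).re := by
    intro hq ht
    have := mul_nonneg (by linarith : 0 ≤ 1 - 2 * (pX + pY)) (sub_nonneg.mpr ht)
    linarith
  have hlt : pX + pY < 1 / 2 → ((Proj0 * ρ).trace).re < 1 / 2 →
      ((Proj0 * pauliChannel pI pX pY pZ ρ).trace).re < 1 / 2 := by
    intro hq ht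
    have := mul_neg_of_pos_of_neg (by linarith : 0 < 1 - 2 * (pX + pY)) (sub_neg.mpr ht)
    linarith
  refine ⟨hge, hlt, fun hq => ?_⟩
  unfold yhat
  by_cases ht : 1 / 2 ≤ ((Proj0 * ρ).trace).re
  · rw [if_pos ht, if_pos (hge hq.le ht)]
  · rw [if_neg ht, if_neg (not_le.mpr (hlt hq (not_le.mp ht)))]
end

section
/- Let ρ be a single-qubit state and let 0 ≤ p < 1. Let E_AD be the amplitude damping channel E_AD(ρ) = [[ρ₀₀ + p ρ₁₁, √(1−p) ρ₀₁], [√(1−p) ρ₁₀, (1−p) ρ₁₁]]. Then Tr[Π₀ E_AD(ρ)] < 1/2 if and only if Tr[Π₁ ρ] > 1/(2(1−p)). Consequently, a state ρ with noiseless label ŷ(ρ) = 1 (i.e., Tr[Π₀ ρ] < 1/2) is a robust point of the amplitude damping channel if and only if Tr[Π₁ ρ] > 1/(2(1−p)). -/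
/-!
Only the diagonal entries matter: `Tr[Π₀ E_AD(ρ)] = ρ₀₀ + p ρ₁₁`, which by `ρ₀₀ + ρ₁₁ = 1`
equals `1 - (1 - p) ρ₁₁`. Since `1 - p > 0`, this is below `1/2` exactly when
`ρ₁₁ > 1 / (2 (1 - p))`. A state with label `1` is robust iff its image also has label `1`,
which is this same inequality.
-/

open Matrix Complex
open scoped ComplexOrder

noncomputable def Proj1 : Matrix (Fin 2) (Fin 2) ℂ := !![0, 0; 0, 1]

/-- The amplitude damping channel
`E_AD(ρ) = [[ρ₀₀ + p ρ₁₁, √(1−p) ρ₀₁], [√(1−p) ρ₁₀, (1−p) ρ₁₁]]`. -/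
noncomputable def ampDamp (p : ℝ) (ρ : Matrix (Fin 2) (Fin 2) ℂ) :
    Matrix (Fin 2) (Fin 2) ℂ :=
  !![ρ 0 0 + (p : ℂ) * ρ 1 1, ((Real.sqrt (1 - p) : ℝ) : ℂ) * ρ 0 1;
     ((Real.sqrt (1 - p) : ℝ) : ℂ) * ρ 1 0, ((1 - p : ℝ) : ℂ) * ρ 1 1]

/-- For a single-qubit state `ρ` and the amplitude damping channel
with `0 ≤ p < 1`: `Tr[Π₀ E_AD(ρ)] < 1/2` iff `Tr[Π₁ ρ] > 1/(2(1−p))`;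
consequently a state with noiseless label `ŷ(ρ) = 1` (i.e. `Tr[Π₀ ρ] < 1/2`) is
a robust point iff `Tr[Π₁ ρ] > 1/(2(1−p))`. -/
theorem ampDamp_label_one_robust_iff
    (ρ : Matrix (Fin 2) (Fin 2) ℂ) (hρ : ρ.PosSemidef) (htr : ρ.trace = 1)
    (p : ℝ) (hp0 : 0 ≤ p) (hp1 : p < 1) :
    (((Proj0 * ampDamp p ρ).trace).re < 1 / 2
        ↔ 1 / (2 * (1 - p)) < ((Proj1 * ρ).trace).re)
    ∧ (((Proj0 * ρ).trace).re < 1 / 2 →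
        (yhat (ampDamp p ρ) = yhat ρ ↔ 1 / (2 * (1 - p)) < ((Proj1 * ρ).trace).re)) := by
  have h0 : ∀ σ : Matrix (Fin 2) (Fin 2) ℂ, (Proj0 * σ).trace = σ 0 0 := fun σ => by
    simp [Proj0, Matrix.trace_fin_two, Matrix.vecMul, dotProduct, Fin.sum_univ_two]
  have h1 : (Proj1 * ρ).trace = ρ 1 1 := by
    simp [Proj1, Matrix.trace_fin_two, Matrix.vecMul, dotProduct, Fin.sum_univ_two]
  have hsum : (ρ 0 0).re + (ρ 1 1).re = 1 := by
    simpa [Matrix.trace_fin_two] using congrArg Complex.re htr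
  have hdamp : (ampDamp p ρ 0 0).re = (ρ 0 0).re + p * (ρ 1 1).re := by
    simp [ampDamp]
  have key : ((Proj0 * ampDamp p ρ).trace).re < 1 / 2
      ↔ 1 / (2 * (1 - p)) < ((Proj1 * ρ).trace).re := by
    rw [h0, h1, hdamp, div_lt_iff₀ (by linarith)]
    constructor <;> intro h <;> nlinarith
  refine ⟨key, fun hlabel => ?_⟩
  rw [← key]
  simp only [yhat, if_neg (not_le.mpr hlabel)]
  split_ifs with h
  · simpa using h
  · simpa using h
end

section
/- Let d ≥ 2 be even, let σ be a d×d density matrix, let P be a d×d Hermitian projector (P² = P) with Tr[P] = d/2, and let 0 < p̄ ≤ 1. Then Tr[P (p̄ σ + (1 − p̄) I/d)] = p̄ Tr[P σ] + (1 − p̄)/2; consequently Tr[P (p̄ σ + (1 − p̄) I/d)] ≥ 1/2 if and only if Tr[P σ] ≥ 1/2. In particular, with P = Π₀ ⊗ I_{2^{n−1}} and d = 2^n, the predicted label of an n-qubit classifier is unchanged by the composition of global depolarizing channels acting at any points in the circuit (whose final state has the form p̄ σ + (1 − p̄) I/d with p̄ the product of the individual depolarizing parameters), so every encoding is completely robust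 to global depolarizing noise. -/
open Matrix Complex
open scoped ComplexOrder

/-- Let `σ` be a `d×d` density matrix (`d ≥ 2` even), `P` a
Hermitian projector with `Tr[P] = d/2`, and `0 < p̄ ≤ 1`. Then
`Tr[P (p̄ σ + (1 − p̄) I/d)] = p̄ Tr[P σ] + (1 − p̄)/2`, and consequently
`Tr[P (p̄ σ + (1 − p̄) I/d)] ≥ 1/2 ↔ Tr[P σ] ≥ 1/2`: the predicted label of the
classifier is unchanged by a composition of global depolarizing channels, so
every encoding is completely robust to global depolarizing noise. -/
theorem global_depolarizing_completely_robust
    (d : ℕ) (hd : 2 ≤ d) (heven : Even d)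
    (σ : Matrix (Fin d) (Fin d) ℂ) (hσ : σ.PosSemidef) (htr : σ.trace = 1)
    (P : Matrix (Fin d) (Fin d) ℂ) (hP : P.IsHermitian) (hproj : P * P = P)
    (hPtr : P.trace = (d : ℂ) / 2)
    (pbar : ℝ) (hp0 : 0 < pbar) (hp1 : pbar ≤ 1) :
    ((P * ((pbar : ℂ) • σ
          + (((1 - pbar : ℝ) : ℂ) * (d : ℂ)⁻¹) • (1 : Matrix (Fin d) (Fin d) ℂ))).trace
        = (pbar : ℂ) * (P * σ).trace + ((1 - pbar : ℝ) : ℂ) / 2)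
    ∧ (1 / 2 ≤ ((P * ((pbar : ℂ) • σ
          + (((1 - pbar : ℝ) : ℂ) * (d : ℂ)⁻¹) • (1 : Matrix (Fin d) (Fin d) ℂ))).trace).re
        ↔ 1 / 2 ≤ ((P * σ).trace).re) := by
  have hd0 : (d : ℂ) ≠ 0 := by
    exact_mod_cast (by omega : d ≠ 0)
  have key : (P * ((pbar : ℂ) • σ
          + (((1 - pbar : ℝ) : ℂ) * (d : ℂ)⁻¹) • (1 : Matrix (Fin d) (Fin d) ℂ))).trace
        = (pbar : ℂ) * (P * σ).trace + ((1 - pbar : ℝ) : ℂ) / 2 := by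
    rw [Matrix.mul_add, Matrix.mul_smul, Matrix.mul_smul, Matrix.mul_one, Matrix.trace_add,
      Matrix.trace_smul, Matrix.trace_smul, hPtr, smul_eq_mul, smul_eq_mul]
    field_simp
  refine ⟨key, ?_⟩
  have hre : ((pbar : ℂ) * (P * σ).trace + ((1 - pbar : ℝ) : ℂ) / 2).re
      = pbar * ((P * σ).trace).re + (1 - pbar) / 2 := by
    rw [Complex.add_re, Complex.re_ofReal_mul, Complex.div_ofNat_re, Complex.ofReal_re]
  rw [key, hre]
  -- The noisy value minus `1/2` is `pbar` times the noiseless value minus `1/2`.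
  constructor <;> intro h <;> nlinarith
end

section
/- Let ρ be a single-qubit state and let p₀₀, p₀₁ be nonnegative reals with p₀₀ + p₀₁ = 1 and p₀₀ > p₀₁. Define the noisy measurement operator Π̃₀ = p₀₀ Π₀ + p₀₁ Π₁. Then Tr[Π̃₀ ρ] = (p₀₀ − p₀₁) Tr[Π₀ ρ] + p₀₁, and consequently Tr[Π̃₀ ρ] ≥ 1/2 if and only if Tr[Π₀ ρ] ≥ 1/2. Hence the classifier's predicted label is unchanged by measurement noise with assignment probabilities satisfying p₀₀ > p₀₁, i.e., every encoding is completely robust to such measurement noise. -/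
/-!
Since `Tr ρ = 1`, the two outcome probabilities are `Tr[Π₀ ρ] = ρ₀₀` and `Tr[Π₁ ρ] = 1 - ρ₀₀`,
so linearity of the trace gives `Tr[Π̃₀ ρ] = (p₀₀ - p₀₁) Tr[Π₀ ρ] + p₀₁`. As `p₀₀ + p₀₁ = 1`, this
is equivalent to `Tr[Π̃₀ ρ] - 1/2 = (p₀₀ - p₀₁) (Tr[Π₀ ρ] - 1/2)`, and the positive factor
`p₀₀ - p₀₁` preserves the sign.
-/

open Matrix Complex
open scoped ComplexOrder

/-- For a single-qubit state `ρ` and measurement noise with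
assignment probabilities `p₀₀ + p₀₁ = 1`, `p₀₀ > p₀₁ ≥ 0`, the noisy POVM
element `Π̃₀ = p₀₀ Π₀ + p₀₁ Π₁` satisfies
`Tr[Π̃₀ ρ] = (p₀₀ − p₀₁) Tr[Π₀ ρ] + p₀₁`, and consequently
`Tr[Π̃₀ ρ] ≥ 1/2 ↔ Tr[Π₀ ρ] ≥ 1/2`: the predicted label is unchanged by such
measurement noise, i.e. every encoding is completely robust to it. -/
theorem measurement_noise_robust
    (ρ : Matrix (Fin 2) (Fin 2) ℂ) (hρ : ρ.PosSemidef) (htr : ρ.trace = 1)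
    (p00 p01 : ℝ) (h00 : 0 ≤ p00) (h01 : 0 ≤ p01)
    (hsum : p00 + p01 = 1) (hgt : p01 < p00) :
    ((((p00 : ℂ) • Proj0 + (p01 : ℂ) • Proj1) * ρ).trace
        = ((p00 - p01 : ℝ) : ℂ) * (Proj0 * ρ).trace + ((p01 : ℝ) : ℂ))
    ∧ (1 / 2 ≤ ((((p00 : ℂ) • Proj0 + (p01 : ℂ) • Proj1) * ρ).trace).re
        ↔ 1 / 2 ≤ ((Proj0 * ρ).trace).re) := by
  have h1 : ρ 1 1 = 1 - ρ 0 0 := by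
    rw [Matrix.trace_fin_two] at htr
    linear_combination htr
  have hP0 : (Proj0 * ρ).trace = ρ 0 0 := by
    simp [Proj0, Matrix.trace_fin_two, Matrix.vecMul, dotProduct, Fin.sum_univ_two]
  have hP1 : (Proj1 * ρ).trace = 1 - ρ 0 0 := by
    simp [Proj1, Matrix.trace_fin_two, Matrix.vecMul, dotProduct, Fin.sum_univ_two, h1]
  have key : (((p00 : ℂ) • Proj0 + (p01 : ℂ) • Proj1) * ρ).trace
      = ((p00 - p01 : ℝ) : ℂ) * (Proj0 * ρ).trace + ((p01 : ℝ) : ℂ) := by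
    rw [add_mul, Matrix.trace_add, smul_mul_assoc, smul_mul_assoc, Matrix.trace_smul,
      Matrix.trace_smul, hP0, hP1, smul_eq_mul, smul_eq_mul]
    push_cast
    ring
  refine ⟨key, ?_⟩
  rw [key, Complex.add_re, Complex.re_ofReal_mul, Complex.ofReal_re]
  -- Since `p00 + p01 = 1`, the affine map `t ↦ (p00 - p01) t + p01` fixes `1 / 2`,
  -- and it is strictly increasing because `p01 < p00`.
  constructor <;> intro h <;> nlinarith
end

section
/- Let Φ be a positive, trace-preserving linear map on 2×2 complex matrices (a trace-preserving quantum channel on one qubit). Then there exists a single-qubit density matrix σ such that ŷ(Φ(σ)) = ŷ(σ), i.e., Tr[Π₀ Φ(σ)] ≥ 1/2 ⇔ Tr[Π₀ σ] ≥ 1/2. Hence for any data point x ∈ X there exists an encoding E with E(x) = σ satisfying ŷ(Φ(E(x))) = ŷ(E(x)): robust encodings exist for every trace-preserving channel. Moreover, every density-matrix fixed point of Φ is such a robust point, i.e., F(Φ) ⊆ R(Φ, E, ŷ). -/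
/-!
Only the `|0⟩`-population `Tr[Π₀ ρ]` matters for the label, so a genuine fixed point of `Φ` is not
needed for existence. On the diagonal states `diagState p`, `p ∈ [0, 1]`, the output population
`Tr[Π₀ Φ(diagState p)]` is affine in `p` and, by positivity and trace preservation, takes values in
`[0, 1]`; hence it equals `p` for some `p` (`exists_affine_fixed`), and the label is then preserved
(`exists_robust_state`). A constant encoding gives the second claim, and the last one is immediate
by rewriting.
-/

open Matrix Complex
open scoped ComplexOrder

/-- The classical mixture `p |0⟩⟨0| + (1 - p) |1⟩⟨1|`. -/
noncomputable def diagState (p : ℝ) : Matrix (Fin 2) (Fin 2) ℂ :=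
  Matrix.diagonal ![(p : ℂ), ((1 - p : ℝ) : ℂ)]

lemma diagState_posSemidef {p : ℝ} (h0 : 0 ≤ p) (h1 : p ≤ 1) : (diagState p).PosSemidef := by
  refine Matrix.PosSemidef.diagonal (fun i => ?_)
  fin_cases i
  · simpa using h0
  · exact Complex.zero_le_real.mpr (sub_nonneg.mpr h1)

lemma diagState_trace (p : ℝ) : (diagState p).trace = 1 := by
  simp [diagState]

lemma diagState_eq (p : ℝ) :
    diagState p = (p : ℂ) • diagState 1 + ((1 - p : ℝ) : ℂ) • diagState 0 := by
  ext i j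
  fin_cases i <;> fin_cases j <;> simp [diagState]

lemma Proj0_mul_trace (ρ : Matrix (Fin 2) (Fin 2) ℂ) : (Proj0 * ρ).trace = ρ 0 0 := by
  simp [Proj0, Matrix.trace_fin_two, Matrix.vecMul, dotProduct, Fin.sum_univ_two]

lemma density_entry_mem {ρ : Matrix (Fin 2) (Fin 2) ℂ} (h : ρ.PosSemidef) (ht : ρ.trace = 1) :
    0 ≤ (ρ 0 0).re ∧ (ρ 0 0).re ≤ 1 := by
  have h0 := (Complex.le_def.mp (h.diag_nonneg (i := 0))).1
  have h1 := (Complex.le_def.mp (h.diag_nonneg (i := 1))).1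
  have h2 := congrArg Complex.re ht
  simp only [Matrix.trace_fin_two, Complex.add_re, Complex.one_re, Complex.zero_re] at h0 h1 h2
  exact ⟨h0, by linarith⟩

/-- The affine function with value `a ≤ 1` at `1` and `b ≥ 0` at `0` has a fixed point in
`[0, 1]`. -/
lemma exists_affine_fixed {a b : ℝ} (ha : a ≤ 1) (hb : 0 ≤ b) :
    ∃ p : ℝ, 0 ≤ p ∧ p ≤ 1 ∧ p * a + (1 - p) * b = p := by
  rcases (show 0 ≤ 1 - a + b by linarith).eq_or_lt with h | h
  · -- The denominator vanishes only for the identity map `a = 1`, `b = 0`.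
    exact ⟨0, le_rfl, zero_le_one, by linarith⟩
  · refine ⟨b / (1 - a + b), by positivity, (div_le_one h).mpr (by linarith), ?_⟩
    field_simp
    ring

/-- Some diagonal density matrix has the same `|0⟩`-population before and after `Φ`. -/
lemma exists_robust_state
    (Φ : Matrix (Fin 2) (Fin 2) ℂ →ₗ[ℂ] Matrix (Fin 2) (Fin 2) ℂ)
    (hpos : ∀ A : Matrix (Fin 2) (Fin 2) ℂ, A.PosSemidef → (Φ A).PosSemidef)
    (htp : ∀ A : Matrix (Fin 2) (Fin 2) ℂ, (Φ A).trace = A.trace) :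
    ∃ σ : Matrix (Fin 2) (Fin 2) ℂ,
        σ.PosSemidef ∧ σ.trace = 1 ∧ yhat (Φ σ) = yhat σ := by
  have key : ∀ p : ℝ, 0 ≤ p → p ≤ 1 →
      0 ≤ (Φ (diagState p) 0 0).re ∧ (Φ (diagState p) 0 0).re ≤ 1 := fun p h0 h1 =>
    density_entry_mem (hpos _ (diagState_posSemidef h0 h1)) ((htp _).trans (diagState_trace p))
  obtain ⟨p, h0, h1, hp⟩ :=
    exists_affine_fixed (key 1 zero_le_one le_rfl).2 (key 0 le_rfl zero_le_one).1
  refine ⟨diagState p, diagState_posSemidef h0 h1, diagState_trace p, ?_⟩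
  have hΦ : (Φ (diagState p) 0 0).re = p := by
    rw [diagState_eq p, map_add, map_smul, map_smul, Matrix.add_apply, Matrix.smul_apply,
      Matrix.smul_apply, smul_eq_mul, smul_eq_mul, Complex.add_re, Complex.re_ofReal_mul,
      Complex.re_ofReal_mul]
    exact hp
  have hσ : (diagState p 0 0).re = p := by simp [diagState]
  simp only [yhat, Proj0_mul_trace, hΦ, hσ]

/-- Let `Φ` be a positive, trace-preserving linear map on 2×2
complex matrices. Then there exists a single-qubit density matrix `σ` with
`ŷ(Φ(σ)) = ŷ(σ)`; hence for any data point `x ∈ X` there is an encoding `E`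
with `E(x) = σ` satisfying `ŷ(Φ(E(x))) = ŷ(E(x))`: robust encodings exist for
every trace-preserving channel. Moreover, every density-matrix fixed point of
`Φ` is such a robust point, i.e. `F(Φ) ⊆ R(Φ, E, ŷ)`. -/
theorem robust_encoding_exists
    (Φ : Matrix (Fin 2) (Fin 2) ℂ →ₗ[ℂ] Matrix (Fin 2) (Fin 2) ℂ)
    (hpos : ∀ A : Matrix (Fin 2) (Fin 2) ℂ, A.PosSemidef → (Φ A).PosSemidef)
    (htp : ∀ A : Matrix (Fin 2) (Fin 2) ℂ, (Φ A).trace = A.trace) :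
    (∃ σ : Matrix (Fin 2) (Fin 2) ℂ,
        σ.PosSemidef ∧ σ.trace = 1 ∧ yhat (Φ σ) = yhat σ)
    ∧ (∀ (X : Type) (x : X), ∃ E : X → Matrix (Fin 2) (Fin 2) ℂ,
        (E x).PosSemidef ∧ (E x).trace = 1 ∧ yhat (Φ (E x)) = yhat (E x))
    ∧ (∀ σ : Matrix (Fin 2) (Fin 2) ℂ,
        σ.PosSemidef → σ.trace = 1 → Φ σ = σ → yhat (Φ σ) = yhat σ) := by
  obtain ⟨σ, hσ⟩ := exists_robust_state Φ hpos htp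
  exact ⟨⟨σ, hσ⟩, fun _ _ => ⟨fun _ => σ, hσ⟩, fun _ _ _ h => by rw [h]⟩
end
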